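/- Let d ≥ 2, let P be a finite poset, and let A be a permutation d-matrix of size |P|^d whose 1-entries are in a bijection β with the elements of P such that p <_P p' iff every coordinate of the position of β(p) is strictly smaller than the corresponding coordinate of the position of β(p'). Let K be a nonnegative real with ex_d(n, A) ≤ K·n^{d−1} for all positive integers n. Then for every family F of subsets of [n] that is induced P-free and every permutation d-partition Q of [n], the number of sets F ∈ F that are prefix unions of Q is at most K·((n + d − 1)/(d − 1))^{d−1}. -/

import Mathlib

/-!
The tuples `(i₁, …, i_d)` with `i_j ≤ |Q_j|` index a hypermatrix `M` of size `n₁ × ⋯ × n_d`, where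
`n_j = |Q_j| + 1`; put a `1` wherever the corresponding prefix union belongs to `F`. Inclusion of
prefix unions is the coordinatewise order on tuples (`le_of_prefixUnion_subset`), and two distinct
1-entries of a permutation matrix differ in every coordinate, so a copy of `A` in `M` is an induced
copy of `P` in `F`. Hence `M` is `A`-free (`prefixMatrix_free`).

The hypothesis on `exd` only concerns cubes, whereas `M` is a box. Let `m` be the smallest side
of the box and choose in each direction a uniformly random cyclic interval of length `m`. The
submatrix of `M` on these intervals is an `A`-free cube of side `m`, hence has at most
`K * m ^ (d - 1)` ones, and each entry of `M` survives with probability `∏ j, m / n_j`. Averaging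
gives `|M| * m ≤ K * ∏ j, n_j` (`ones_mul_le`), i.e. `|M|` is at most `K` times the product of the
other `d - 1` sides. As `∑ j, n_j = n + d` and `m ≥ 1`, the AM-GM inequality finishes the proof.
-/

/-- Number of 1-entries of a 0-1 hypermatrix. -/
def ones {ι : Type*} [Fintype ι] [DecidableEq ι] {nn : ι → ℕ}
    (M : (∀ j, Fin (nn j)) → Bool) : ℕ :=
  (Finset.univ.filter fun i => M i = true).card

/-- The hypermatrix `M` contains the hypermatrix `A`: there are strictly increasing
maps, one for each coordinate, sending 1-entries of `A` to 1-entries of `M`. -/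
def MatContains {ι : Type*} {kk nn : ι → ℕ}
    (M : (∀ j, Fin (nn j)) → Bool) (A : (∀ j, Fin (kk j)) → Bool) : Prop :=
  ∃ f : ∀ j, Fin (kk j) → Fin (nn j), (∀ j, StrictMono (f j)) ∧
    ∀ i, A i = true → M (fun j => f j (i j)) = true

/-- A permutation d-matrix of size k^d: exactly `k` ones, and for each coordinate
direction `j` and each value `v` there is exactly one 1-entry with j-th coordinate `v`. -/
def IsPermMatrix {d k : ℕ} (A : (Fin d → Fin k) → Bool) : Prop :=
  (Finset.univ.filter fun i => A i = true).card = k ∧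
    ∀ (j : Fin d) (v : Fin k), ∃! i : Fin d → Fin k, A i = true ∧ i j = v

/-- The extremal number: the maximum number of 1-entries of an `A`-free
hypermatrix of size `nn`. -/
noncomputable def exd {ι : Type*} [Fintype ι] [DecidableEq ι] (nn : ι → ℕ) {kk : ι → ℕ}
    (A : (∀ j, Fin (kk j)) → Bool) : ℕ :=
  sSup {m : ℕ | ∃ M : (∀ j, Fin (nn j)) → Bool, ¬ MatContains M A ∧ ones M = m}

/-- The family `F` of subsets of `[n]` contains the poset `P` as an induced subposet. -/
def ContainsInduced (P : Type*) [PartialOrder P] {n : ℕ}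
    (F : Finset (Finset (Fin n))) : Prop :=
  ∃ α : P → Finset (Fin n), Function.Injective α ∧ (∀ p, α p ∈ F) ∧
    ∀ x y : P, x < y ↔ α x ⊂ α y

/-- A permutation d-partition of `[n]`: an ordered partition of a permutation of the
elements of `[n]` into `d` (possibly empty) sequences. -/
def IsPermPartition {n d : ℕ} (Q : Fin d → List (Fin n)) : Prop :=
  (List.ofFn Q).flatten.Perm (List.finRange n)

/-- `F` is a prefix union of the permutation d-partition `Q`. -/
def IsPrefixUnion {n d : ℕ} (Q : Fin d → List (Fin n)) (F : Finset (Fin n)) : Prop :=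
  ∃ t : Fin d → ℕ, (∀ j, t j ≤ (Q j).length) ∧
    F = Finset.univ.biUnion fun j => ((Q j).take (t j)).toFinset

/-! ### Prefix unions and their hypermatrix -/

/-- The prefix union of `Q` taking the first `t j` elements of each `Q j`. -/
def prefixUnion {n d : ℕ} (Q : Fin d → List (Fin n)) (t : Fin d → ℕ) : Finset (Fin n) :=
  Finset.univ.biUnion fun j => ((Q j).take (t j)).toFinset

lemma prefixUnion_mono {n d : ℕ} (Q : Fin d → List (Fin n)) {t t' : Fin d → ℕ}
    (h : ∀ j, t j ≤ t' j) : prefixUnion Q t ⊆ prefixUnion Q t' := by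
  intro x hx
  simp only [prefixUnion, Finset.mem_biUnion, Finset.mem_univ, true_and, List.mem_toFinset] at hx ⊢
  obtain ⟨j, hj⟩ := hx
  exact ⟨j, (List.take_prefix_take_left (h j)).subset hj⟩

/-- Together with `prefixUnion_mono`: inclusion of prefix unions is the coordinatewise order. If
`t' j < t j`, the element of `Q j` at index `t' j` lies in the first union but not in the second. -/
lemma le_of_prefixUnion_subset {n d : ℕ} {Q : Fin d → List (Fin n)} (hQ : IsPermPartition Q)
    {t t' : Fin d → ℕ} (ht : ∀ j, t j ≤ (Q j).length)
    (h : prefixUnion Q t ⊆ prefixUnion Q t') (j : Fin d) : t j ≤ t' j := by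
  have hnd : (List.ofFn Q).flatten.Nodup := hQ.nodup_iff.2 (List.nodup_finRange n)
  rw [List.nodup_flatten] at hnd
  obtain ⟨hnd1, hnd2⟩ := hnd
  rw [List.pairwise_ofFn] at hnd2
  by_contra! hlt
  have hlen : t' j < (Q j).length := hlt.trans_le (ht j)
  have hx : (Q j)[t' j] ∈ prefixUnion Q t := by
    simp only [prefixUnion, Finset.mem_biUnion, Finset.mem_univ, true_and, List.mem_toFinset]
    exact ⟨j, List.mem_take_iff_getElem.2 ⟨t' j, by omega, rfl⟩⟩
  have hx' := h hx
  simp only [prefixUnion, Finset.mem_biUnion, Finset.mem_univ, true_and, List.mem_toFinset] at hx'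
  obtain ⟨k, hk⟩ := hx'
  have hkj : k = j := by
    rcases lt_trichotomy k j with hh | hh | hh
    · exact (hnd2 hh (List.mem_of_mem_take hk) (List.getElem_mem hlen)).elim
    · exact hh
    · exact (hnd2 hh (List.getElem_mem hlen) (List.mem_of_mem_take hk)).elim
  subst hkj
  obtain ⟨i, hi, hie⟩ := List.mem_take_iff_getElem.1 hk
  have := (List.Nodup.getElem_inj_iff (hnd1 (Q k) (by simp))).1 hie
  omega

/-- The hypermatrix marking the prefix unions of `Q` that belong to `F`. Indices start at `0`,
so the entry `i` stands for the union of the first `i j` elements of each `Q j`. -/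
def prefixMatrix {n d : ℕ} (Q : Fin d → List (Fin n)) (F : Finset (Finset (Fin n))) :
    (∀ j : Fin d, Fin ((Q j).length + 1)) → Bool :=
  fun i => decide (prefixUnion Q (fun j => (i j : ℕ)) ∈ F)

lemma ncard_le_ones {n d : ℕ} (Q : Fin d → List (Fin n)) (F : Finset (Finset (Fin n))) :
    {S | S ∈ F ∧ IsPrefixUnion Q S}.ncard ≤ ones (prefixMatrix Q F) := by
  classical
  have hsub : {S | S ∈ F ∧ IsPrefixUnion Q S} ⊆
      ((Finset.univ.filter fun i => prefixMatrix Q F i = true).image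
        fun i => prefixUnion Q (fun j => (i j : ℕ)) : Finset (Finset (Fin n))) := by
    rintro S ⟨hS, t, ht, rfl⟩
    simp only [Finset.coe_image, Set.mem_image, Finset.mem_coe, Finset.mem_filter,
      Finset.mem_univ, true_and]
    refine ⟨fun j => ⟨t j, Nat.lt_succ_of_le (ht j)⟩, ?_, rfl⟩
    exact decide_eq_true hS
  calc _ ≤ _ := Set.ncard_le_ncard hsub (Finset.finite_toSet _)
    _ ≤ _ := by rw [Set.ncard_coe_finset]; exact Finset.card_image_le

lemma prefixMatrix_free {n d k : ℕ} (hd : 0 < d) {P : Type} [PartialOrder P]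
    {A : (Fin d → Fin k) → Bool} (hA : IsPermMatrix A)
    {β : P → (Fin d → Fin k)} (hβinj : Function.Injective β)
    (hβ : ∀ p, A (β p) = true) (hβord : ∀ p p' : P, p < p' ↔ ∀ j, β p j < β p' j)
    {F : Finset (Finset (Fin n))} (hF : ¬ ContainsInduced P F)
    {Q : Fin d → List (Fin n)} (hQ : IsPermPartition Q) :
    ¬ MatContains (prefixMatrix Q F) A := by
  rintro ⟨f, hf, hM⟩
  apply hF
  have key : ∀ x y : P, prefixUnion Q (fun j => (f j (β x j) : ℕ)) ⊆
      prefixUnion Q (fun j => (f j (β y j) : ℕ)) → ∀ j, β x j ≤ β y j := by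
    intro x y h j
    have := le_of_prefixUnion_subset hQ (fun j => Nat.le_of_lt_succ (f j (β x j)).2) h j
    exact (hf j).le_iff_le.1 this
  refine ⟨fun p => prefixUnion Q (fun j => (f j (β p j) : ℕ)), ?_, ?_, ?_⟩
  · intro x y hxy
    apply hβinj
    funext j
    exact le_antisymm (key x y hxy.subset j)
      (key y x hxy.symm.subset j)
  · intro p
    simpa [prefixMatrix] using hM (β p) (hβ p)
  · intro x y
    rw [Finset.ssubset_iff_subset_ne, hβord]
    constructor
    · intro h
      refine ⟨prefixUnion_mono Q fun j => ((hf j) (h j)).le, fun he => ?_⟩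
      exact absurd (key y x he.symm.subset ⟨0, hd⟩) (not_le.2 (h _))
    · rintro ⟨h, hne⟩ j
      refine lt_of_le_of_ne (key x y h j) fun he => hne ?_
      -- A permutation matrix has a single 1-entry with a given `j`-th coordinate.
      have hxy : β x = β y := (hA.2 j (β y j)).unique ⟨hβ x, he⟩ ⟨hβ y, rfl⟩
      simp only [hxy]

/-! ### Averaging over subcubes of a box -/

lemma ones_le_exd {d m k : ℕ} {A : (Fin d → Fin k) → Bool}
    (M : (Fin d → Fin m) → Bool) (h : ¬ MatContains (nn := fun _ => m) (kk := fun _ => k) M A) :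
    ones (nn := fun _ => m) M ≤ exd (fun _ : Fin d => m) (kk := fun _ => k) A := by
  refine le_csSup ⟨Fintype.card (Fin d → Fin m), ?_⟩ ⟨M, h, rfl⟩
  rintro _ ⟨M', -, rfl⟩
  exact Finset.card_le_univ _

/-- The cyclic interval `{s, s + 1, …, s + m - 1}` of `ℤ/(l+1)`. -/
def cyclicInterval {l : ℕ} (m : ℕ) (s : Fin (l + 1)) : Finset (Fin (l + 1)) :=
  Finset.univ.filter fun x => ((x - s : Fin (l + 1)) : ℕ) < m

lemma card_val_lt {l m : ℕ} (hm : m ≤ l + 1) :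
    (Finset.univ.filter fun x : Fin (l + 1) => (x : ℕ) < m).card = m := by
  rw [Fin.card_filter_val_lt]; omega

lemma card_cyclicInterval {l m : ℕ} (hm : m ≤ l + 1) (s : Fin (l + 1)) :
    (cyclicInterval m s).card = m := by
  refine (Finset.card_equiv (Equiv.subRight s) fun x => ?_).trans (card_val_lt hm)
  simp [cyclicInterval]

lemma card_starts {l m : ℕ} (hm : m ≤ l + 1) (x : Fin (l + 1)) :
    (Finset.univ.filter fun s => x ∈ cyclicInterval m s).card = m := by
  refine (Finset.card_equiv (Equiv.subLeft x) fun s => ?_).trans (card_val_lt hm)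
  simp [cyclicInterval]

/-- The submatrix of an `A`-free box on a product of `m`-element sets is an `A`-free cube. -/
lemma card_restrict_le_exd {d m k : ℕ} {A : (Fin d → Fin k) → Bool} {l : Fin d → ℕ}
    (M : (∀ j, Fin (l j + 1)) → Bool) (h : ¬ MatContains (kk := fun _ => k) M A)
    (S : ∀ j, Finset (Fin (l j + 1))) (hS : ∀ j, (S j).card = m) :
    (Finset.univ.filter fun i => M i = true ∧ ∀ j, i j ∈ S j).card ≤
      exd (fun _ : Fin d => m) (kk := fun _ => k) A := by
  let g : ∀ j, Fin m ↪o Fin (l j + 1) := fun j => (S j).orderEmbOfFin (hS j)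
  let M' : (Fin d → Fin m) → Bool := fun i => M fun j => g j (i j)
  refine le_trans ?_ (ones_le_exd M' ?_)
  · have hsub : (Finset.univ.filter fun i => M i = true ∧ ∀ j, i j ∈ S j) ⊆
        (Finset.univ.filter fun i => M' i = true).image fun i j => g j (i j) := by
      intro x hx
      simp only [Finset.mem_filter, Finset.mem_univ, true_and] at hx
      have hr : ∀ j, ∃ y, g j y = x j := fun j => by
        have := hx.2 j
        rw [← Finset.mem_coe, ← Finset.range_orderEmbOfFin (S j) (hS j)] at this
        exact this
      choose y hy using hr
      refine Finset.mem_image.2 ⟨y, ?_, funext hy⟩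
      simp [M', hy, hx.1]
    exact (Finset.card_le_card hsub).trans Finset.card_image_le
  · rintro ⟨f, hf, hM⟩
    exact h ⟨fun j a => g j (f j a), fun j => (g j).strictMono.comp (hf j), hM⟩

/-- Averaging over all products of cyclic intervals of length `m`: each entry of the box lies in
exactly `m ^ d` of the `∏ j, (l j + 1)` products. -/
lemma ones_mul_pow_le {d m k : ℕ} {A : (Fin d → Fin k) → Bool} {l : Fin d → ℕ}
    (M : (∀ j, Fin (l j + 1)) → Bool) (h : ¬ MatContains (kk := fun _ => k) M A)
    (hm : ∀ j, m ≤ l j + 1) :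
    ones M * m ^ d ≤ (∏ j, (l j + 1)) * exd (fun _ : Fin d => m) (kk := fun _ => k) A := by
  classical
  have hstarts : ∀ x : ∀ j, Fin (l j + 1),
      (Finset.univ.filter fun s : ∀ j, Fin (l j + 1) =>
        ∀ j, x j ∈ cyclicInterval m (s j)).card = m ^ d := by
    intro x
    have : (Finset.univ.filter fun s : ∀ j, Fin (l j + 1) =>
        ∀ j, x j ∈ cyclicInterval m (s j)) =
        Fintype.piFinset fun j => Finset.univ.filter fun s => x j ∈ cyclicInterval m s := by
      ext s; simp [Fintype.mem_piFinset]
    rw [this, Fintype.card_piFinset]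
    simp [card_starts (hm _)]
  calc ones M * m ^ d
      = ∑ x ∈ Finset.univ.filter (fun i => M i = true),
          (Finset.univ.filter fun s : ∀ j, Fin (l j + 1) =>
            ∀ j, x j ∈ cyclicInterval m (s j)).card := by
        rw [Finset.sum_congr rfl fun x _ => hstarts x]; simp [ones]
    _ = ∑ s : ∀ j, Fin (l j + 1), ((Finset.univ.filter fun i => M i = true).filter
          fun x => ∀ j, x j ∈ cyclicInterval m (s j)).card :=
        Finset.sum_card_bipartiteAbove_eq_sum_card_bipartiteBelow
          (fun (x s : ∀ j, Fin (l j + 1)) => ∀ j, x j ∈ cyclicInterval m (s j))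
    _ ≤ ∑ _s : ∀ j, Fin (l j + 1), exd (fun _ : Fin d => m) (kk := fun _ => k) A := by
        refine Finset.sum_le_sum fun s _ => ?_
        rw [Finset.filter_filter]
        exact card_restrict_le_exd M h _ fun j => card_cyclicInterval (hm j) (s j)
    _ = _ := by simp

lemma ones_mul_le {d m k : ℕ} (hd : 0 < d) {A : (Fin d → Fin k) → Bool} {l : Fin d → ℕ}
    (M : (∀ j, Fin (l j + 1)) → Bool) (h : ¬ MatContains (kk := fun _ => k) M A)
    (hm0 : 0 < m) (hm : ∀ j, m ≤ l j + 1) {K : ℝ}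
    (hex : (exd (fun _ : Fin d => m) (kk := fun _ => k) A : ℝ) ≤ K * (m : ℝ) ^ (d - 1)) :
    (ones M : ℝ) * m ≤ K * ∏ j, ((l j : ℝ) + 1) := by
  have h1 : (ones M : ℝ) * m ^ d ≤
      (∏ j, ((l j : ℝ) + 1)) * exd (fun _ : Fin d => m) (kk := fun _ => k) A := by
    exact_mod_cast ones_mul_pow_le M h hm
  have hp : (0 : ℝ) ≤ ∏ j, ((l j : ℝ) + 1) := Finset.prod_nonneg fun j _ => by positivity
  have h2 := h1.trans (mul_le_mul_of_nonneg_left hex hp)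
  have hm' : (0 : ℝ) < (m : ℝ) ^ (d - 1) := by positivity
  have hpow : (m : ℝ) ^ d = m ^ (d - 1) * m := by rw [← pow_succ, Nat.sub_add_cancel hd]
  rw [hpow] at h2
  refine le_of_mul_le_mul_right ?_ hm'
  linarith

/-! ### The sides of the box -/

/-- The AM-GM inequality with the root cleared. -/
lemma prod_le_mean_pow {ι : Type*} (s : Finset ι) (hs : s.Nonempty) (z : ι → ℝ)
    (hz : ∀ i ∈ s, 0 ≤ z i) : ∏ i ∈ s, z i ≤ ((∑ i ∈ s, z i) / s.card) ^ s.card := by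
  have hc : 0 < s.card := hs.card_pos
  have h := Real.geom_mean_le_arith_mean s (fun _ => 1) z (fun _ _ => zero_le_one)
    (by simpa using hs) hz
  simp only [Real.rpow_one, Finset.sum_const, nsmul_eq_mul, mul_one, one_mul] at h
  have hp := Finset.prod_nonneg hz
  calc ∏ i ∈ s, z i = ((∏ i ∈ s, z i) ^ ((s.card : ℝ)⁻¹)) ^ s.card :=
        (Real.rpow_inv_natCast_pow hp hc.ne').symm
    _ ≤ _ := pow_le_pow_left₀ (Real.rpow_nonneg hp _) h _

lemma sum_length_eq {n d : ℕ} {Q : Fin d → List (Fin n)} (hQ : IsPermPartition Q) :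
    ∑ j, (Q j).length = n := by
  have h := hQ.length_eq
  rw [List.length_flatten, List.map_ofFn, List.sum_ofFn, List.length_finRange] at h
  exact h

/-- Let `d ≥ 2`, `P` a finite poset, `A` a permutation d-matrix of size
`|P|^d` whose 1-entries are in bijection `β` with the elements of `P` as in
Observation (poset2matrix), and `K ≥ 0` with `ex_d(n,A) ≤ K·n^(d−1)` for all positive `n`.
Then for every induced `P`-free family `F` of subsets of `[n]` and every permutation
d-partition `Q` of `[n]`, the number of members of `F` that are prefix unions of `Q` is at
most `K·((n+d−1)/(d−1))^(d−1)`. -/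
theorem stmt_7 (d : ℕ) (hd : 2 ≤ d) (P : Type) [PartialOrder P] [Fintype P]
    (A : (Fin d → Fin (Fintype.card P)) → Bool) (hA : IsPermMatrix A)
    (β : P → (Fin d → Fin (Fintype.card P))) (hβinj : Function.Injective β)
    (hβbij : ∀ i, A i = true ↔ ∃ p, β p = i)
    (hβord : ∀ p p' : P, p < p' ↔ ∀ j, β p j < β p' j)
    (K : ℝ) (hK : 0 ≤ K)
    (hex : ∀ m : ℕ, 0 < m → (exd (fun _ : Fin d => m) A : ℝ) ≤ K * (m : ℝ) ^ (d - 1))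
    (n : ℕ) (F : Finset (Finset (Fin n))) (hF : ¬ ContainsInduced P F)
    (Q : Fin d → List (Fin n)) (hQ : IsPermPartition Q) :
    ({S | S ∈ F ∧ IsPrefixUnion Q S}.ncard : ℝ) ≤
      K * (((n : ℝ) + (d : ℝ) - 1) / ((d : ℝ) - 1)) ^ (d - 1) := by
  have hd0 : 0 < d := by omega
  have : Nonempty (Fin d) := ⟨⟨0, hd0⟩⟩
  have hfree : ¬ MatContains (prefixMatrix Q F) A :=
    prefixMatrix_free hd0 hA hβinj (fun p => (hβbij _).2 ⟨p, rfl⟩) hβord hF hQ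
  -- The cubes used for averaging have the smallest side of the box.
  obtain ⟨j₀, hj₀⟩ := Finite.exists_min fun j => (Q j).length
  have h1 := ones_mul_le (m := (Q j₀).length + 1) hd0 (prefixMatrix Q F) hfree (Nat.succ_pos _)
    (fun j => Nat.succ_le_succ (hj₀ j)) (hex _ (Nat.succ_pos _))
  rw [← Finset.mul_prod_erase Finset.univ (fun j => ((Q j).length : ℝ) + 1)
    (Finset.mem_univ j₀)] at h1
  have hcard : (Finset.univ.erase j₀).card = d - 1 := by simp
  have hdcast : ((d - 1 : ℕ) : ℝ) = (d : ℝ) - 1 := by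
    rw [Nat.cast_sub (by omega)]; simp
  have h2 : (ones (prefixMatrix Q F) : ℝ) ≤
      K * ∏ j ∈ Finset.univ.erase j₀, (((Q j).length : ℝ) + 1) := by
    have hpos : (0 : ℝ) < ((Q j₀).length : ℝ) + 1 := by positivity
    refine le_of_mul_le_mul_right ?_ hpos
    push_cast at h1
    linarith
  have h3 := prod_le_mean_pow (Finset.univ.erase j₀)
    (Finset.card_pos.1 (by omega)) (fun j => ((Q j).length : ℝ) + 1)
    (fun j _ => by positivity)
  have hsum : ∑ j ∈ Finset.univ.erase j₀, (((Q j).length : ℝ) + 1) ≤ (n : ℝ) + d - 1 := by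
    have hall : ∑ j, (((Q j).length : ℝ) + 1) = n + d := by
      rw [Finset.sum_add_distrib, ← Nat.cast_sum, sum_length_eq hQ]; simp
    rw [← Finset.add_sum_erase Finset.univ _ (Finset.mem_univ j₀)] at hall
    have : (0 : ℝ) ≤ (Q j₀).length := by positivity
    linarith
  rw [hcard, hdcast] at h3
  have hd1 : (0 : ℝ) ≤ (d : ℝ) - 1 := by rw [← hdcast]; positivity
  have hncard : ({S | S ∈ F ∧ IsPrefixUnion Q S}.ncard : ℝ) ≤ ones (prefixMatrix Q F) := by
    exact_mod_cast ncard_le_ones Q F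
  refine (hncard.trans h2).trans (mul_le_mul_of_nonneg_left (h3.trans ?_) hK)
  gcongr
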